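/- arXiv:2507.17030 — 2 statements merged into one kernel-verified Lean document; each statement's English description precedes it below -/
import Mathlib

section
/- Let p and q be Borel probability measures on ℝ^D, let θ_l ∈ ℝ^D be fixed, and let φ : ℝ^D → ℝ^m be measurable. Define B_r = {θ ∈ ℝ^D : ‖φ(θ) − φ(θ_l)‖₂ ≤ r} and assume the function r ↦ q(B_r) is continuous. Define the ball probability rank U_q(θ*) = q({θ : ‖φ(θ) − φ(θ_l)‖₂ ≤ ‖φ(θ*) − φ(θ_l)‖₂}). Then the following are equivalent: (i) p(B_r) = q(B_r) for all r ≥ 0; (ii) when θ* ∼ p, the random variable U_q(θ*) is uniformly distributed on [0,1], i.e., p({θ* : U_q(θ*) ≤ u}) = u for every u ∈ [0,1]. -/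
open MeasureTheory
open scoped ENNReal

open Filter Topology

/-!
Write `F r = q {f ≤ r}` with `f θ = ‖φ θ - φ θl‖`, so that the rank of `θ` is `F (f θ)`. Since `F`
is monotone, `{f ≤ r} ⊆ {F ∘ f ≤ F r}`, and `{F ∘ f ≤ u} ⊆ {f ≤ r}` as soon as `u < F r`. These two
inclusions squeeze the `p`-measure of each family of sublevel sets by that of the other; in the
direction from balls to ranks, levels `u < 1` are values of `F` by the intermediate value theorem.
-/

section Monotone

variable {Ω X : Type*} [MeasurableSpace Ω] {μ : Measure Ω} [LinearOrder X] {f : Ω → X}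
  {F : X → ℝ≥0∞} {c : ℝ≥0∞}

theorem measure_setOf_comp_le_of_measure_setOf_le (hF : Monotone F)
    (hrange : Set.Iio c ⊆ Set.range F) (h : ∀ r, μ {x | f x ≤ r} = F r) {u : ℝ≥0∞} (hu : u < c) :
    μ {x | F (f x) ≤ u} = u := by
  apply le_antisymm
  · refine le_of_forall_gt_imp_ge_of_dense fun v huv ↦ ?_
    obtain ⟨w, huw, hw⟩ := exists_between (lt_min huv hu)
    obtain ⟨hwv, hwc⟩ := lt_min_iff.mp hw
    obtain ⟨r, rfl⟩ := hrange hwc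
    calc μ {x | F (f x) ≤ u} ≤ μ {x | f x ≤ r} :=
          measure_mono fun _ hx ↦ (hF.reflect_lt (hx.trans_lt huw)).le
      _ = F r := h r
      _ ≤ v := hwv.le
  · obtain ⟨r, rfl⟩ := hrange hu
    calc F r = μ {x | f x ≤ r} := (h r).symm
      _ ≤ μ {x | F (f x) ≤ F r} := measure_mono fun _ hx ↦ hF hx

theorem measure_setOf_le_of_measure_setOf_comp_le (hF : Monotone F) (hF_le : ∀ r, F r ≤ c)
    (h : ∀ u ≤ c, μ {x | F (f x) ≤ u} = u) (r : X) :
    μ {x | f x ≤ r} = F r := by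
  apply le_antisymm
  · calc μ {x | f x ≤ r} ≤ μ {x | F (f x) ≤ F r} := measure_mono fun _ hx ↦ hF hx
      _ = F r := h _ (hF_le r)
  · refine le_of_forall_lt_imp_le_of_dense fun v hv ↦ ?_
    calc v = μ {x | F (f x) ≤ v} := (h v (hv.le.trans (hF_le r))).symm
      _ ≤ μ {x | f x ≤ r} := measure_mono fun _ hx ↦ (hF.reflect_lt (hx.trans_lt hv)).le

end Monotone

section Sublevel

variable {Ω X : Type*} [MeasurableSpace Ω]

theorem monotone_measure_setOf_le [Preorder X] (μ : Measure Ω) (f : Ω → X) :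
    Monotone fun r ↦ μ {x | f x ≤ r} :=
  fun _ _ hrs ↦ measure_mono fun _ hx ↦ le_trans hx hrs

theorem measure_setOf_le_eq_zero_of_forall_lt [Preorder X] (μ : Measure Ω) {f : Ω → X} {r : X}
    (h : ∀ x, r < f x) : μ {x | f x ≤ r} = 0 := by
  simp [fun x ↦ (h x).not_ge]

theorem tendsto_measure_setOf_le_atTop [Preorder X] [IsDirectedOrder X]
    [(atTop : Filter X).IsCountablyGenerated] (μ : Measure Ω) (f : Ω → X) :
    Tendsto (fun r ↦ μ {x | f x ≤ r}) atTop (𝓝 (μ Set.univ)) := by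
  have hUnion : ⋃ r, {x | f x ≤ r} = Set.univ :=
    Set.iUnion_eq_univ_iff.mpr fun x ↦ ⟨f x, le_rfl⟩
  rw [← hUnion]
  exact tendsto_measure_iUnion_atTop fun _ _ hrs _ hx ↦ le_trans hx hrs

theorem Iio_measure_univ_subset_range_measure_setOf_le {μ : Measure Ω} {f : Ω → ℝ}
    (hf : BddBelow (Set.range f)) (hcont : Continuous fun r ↦ μ {x | f x ≤ r}) :
    Set.Iio (μ Set.univ) ⊆ Set.range fun r ↦ μ {x | f x ≤ r} := by
  intro v hv
  obtain ⟨a, ha⟩ := hf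
  have hlow : μ {x | f x ≤ a - 1} ≤ v :=
    (measure_setOf_le_eq_zero_of_forall_lt μ fun x ↦
      (sub_one_lt a).trans_le (ha ⟨x, rfl⟩)).trans_le zero_le
  obtain ⟨b, hb⟩ := ((tendsto_measure_setOf_le_atTop μ f).eventually_const_lt hv).exists
  exact mem_range_of_exists_le_of_exists_ge hcont ⟨a - 1, hlow⟩ ⟨b, hb.le⟩

end Sublevel

theorem ball_probability_equivalence_general {Ω : Type*} [MeasurableSpace Ω] (p q : Measure Ω)
    [IsProbabilityMeasure p] [IsProbabilityMeasure q] {f : Ω → ℝ} (hf : ∀ x, 0 ≤ f x)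
    (hcont : Continuous fun r ↦ q {x | f x ≤ r}) :
    (∀ r, 0 ≤ r → p {x | f x ≤ r} = q {x | f x ≤ r}) ↔
      ∀ u : ℝ≥0∞, u ≤ 1 → p {y | q {x | f x ≤ f y} ≤ u} = u := by
  have hmono := monotone_measure_setOf_le q f
  constructor
  · intro h u hu
    rcases hu.eq_or_lt with rfl | hu
    · simp [prob_le_one]
    have hrange := Iio_measure_univ_subset_range_measure_setOf_le
      ⟨0, Set.forall_mem_range.mpr hf⟩ hcont
    rw [measure_univ] at hrange
    refine measure_setOf_comp_le_of_measure_setOf_le hmono hrange (fun r ↦ ?_) hu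
    rcases le_or_gt 0 r with hr | hr
    · exact h r hr
    · have hlt : ∀ x, r < f x := fun x ↦ hr.trans_le (hf x)
      rw [measure_setOf_le_eq_zero_of_forall_lt p hlt, measure_setOf_le_eq_zero_of_forall_lt q hlt]
  · exact fun h r _ ↦
      measure_setOf_le_of_measure_setOf_comp_le hmono (fun _ ↦ prob_le_one) h r

/-- **Ball probability equivalence (Theorem 2).** For Borel probability measures `p`
and `q` on ℝ^D, a fixed reference point `θl`, and a measurable embedding `φ`, with
`B_r = {θ | ‖φ θ - φ θl‖ ≤ r}` and `r ↦ q(B_r)` continuous, the following are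
equivalent: (i) `p(B_r) = q(B_r)` for all `r ≥ 0`; (ii) the ball probability rank
`U_q(θ*) = q {θ | ‖φ θ - φ θl‖ ≤ ‖φ θ* - φ θl‖}` is uniformly distributed on `[0,1]`
when `θ* ∼ p`. -/
theorem ball_probability_equivalence
    (D m : ℕ)
    (p q : Measure (EuclideanSpace ℝ (Fin D)))
    [IsProbabilityMeasure p] [IsProbabilityMeasure q]
    (θl : EuclideanSpace ℝ (Fin D))
    (φ : EuclideanSpace ℝ (Fin D) → EuclideanSpace ℝ (Fin m))
    (hφ_meas : Measurable φ)
    (hcont : Continuous fun r : ℝ =>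
      q {θ : EuclideanSpace ℝ (Fin D) | ‖φ θ - φ θl‖ ≤ r}) :
    (∀ r : ℝ, 0 ≤ r →
        p {θ : EuclideanSpace ℝ (Fin D) | ‖φ θ - φ θl‖ ≤ r}
          = q {θ : EuclideanSpace ℝ (Fin D) | ‖φ θ - φ θl‖ ≤ r})
      ↔
    (∀ u : ℝ≥0∞, u ≤ 1 →
        p {θs : EuclideanSpace ℝ (Fin D) |
            q {θ : EuclideanSpace ℝ (Fin D) | ‖φ θ - φ θl‖ ≤ ‖φ θs - φ θl‖} ≤ u} = u) :=
  ball_probability_equivalence_general p q (fun _ ↦ norm_nonneg _) hcont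
end

section
/- Let p and q be Borel probability measures on ℝ^D, let θ_l ∈ ℝ^D be fixed, and let φ : ℝ^D → ℝ^m be measurable. Define B_r = {θ ∈ ℝ^D : ‖φ(θ) − φ(θ_l)‖₂ ≤ r} and assume r ↦ q(B_r) is continuous. Suppose the ball probability rank U_q(θ*) = q({θ : ‖φ(θ) − φ(θ_l)‖₂ ≤ ‖φ(θ*) − φ(θ_l)‖₂}) satisfies p({θ* : U_q(θ*) ≤ u}) = u for every u ∈ [0,1] (i.e., U_q(θ*) is uniform on [0,1] under θ* ∼ p). Then p(B_r) = q(B_r) for every r ≥ 0. -/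
open MeasureTheory
open scoped ENNReal

/-! Let `X` be the distance to `θl` and `F` its distribution function under `q`, so that the rank is
`U = F ∘ X`. Monotonicity of `F` gives `{U < F r} ⊆ {X ≤ r} ⊆ {U ≤ F r}`, and when `U` is uniform
under `p` both outer events have probability `F r`. -/

section

variable {Ω Ω' ι : Type*} [MeasurableSpace Ω] [MeasurableSpace Ω']

theorem monotone_measure_setOf_le_s5 [Preorder ι] (ν : Measure Ω) (Y : Ω → ι) :
    Monotone fun r => ν {ω | Y ω ≤ r} :=
  fun _ _ hrs => measure_mono fun _ hω => le_trans hω hrs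

theorem le_measure_lt_of_forall_lt_le_measure_le {μ : Measure Ω} {U : Ω → ℝ≥0∞} {u : ℝ≥0∞}
    (hU : ∀ v < u, v ≤ μ {ω | U ω ≤ v}) : u ≤ μ {ω | U ω < u} := by
  refine le_of_forall_lt_imp_le_of_dense fun v hv => ?_
  calc v ≤ μ {ω | U ω ≤ v} := hU v hv
    _ ≤ μ {ω | U ω < u} := measure_mono fun _ hω => lt_of_le_of_lt hω hv

variable [LinearOrder ι]

theorem measure_le_eq_of_monotone_of_uniform {μ : Measure Ω} {X : Ω → ι} {F : ι → ℝ≥0∞}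
    (hF : Monotone F) {r : ι} (hU : ∀ u ≤ F r, μ {ω | F (X ω) ≤ u} = u) :
    μ {ω | X ω ≤ r} = F r := by
  apply le_antisymm
  · calc μ {ω | X ω ≤ r} ≤ μ {ω | F (X ω) ≤ F r} := measure_mono fun _ hω => hF hω
      _ = F r := hU (F r) le_rfl
  · calc F r ≤ μ {ω | F (X ω) < F r} :=
          le_measure_lt_of_forall_lt_le_measure_le fun v hv => (hU v hv.le).ge
      _ ≤ μ {ω | X ω ≤ r} := measure_mono fun _ hω => (hF.reflect_lt hω).le

theorem ball_probability_converse_general (p : Measure Ω) (q : Measure Ω') [IsProbabilityMeasure q]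
    (X : Ω → ι) (Y : Ω' → ι)
    (huniform : ∀ u : ℝ≥0∞, u ≤ 1 → p {ω | q {ω' | Y ω' ≤ X ω} ≤ u} = u) (r : ι) :
    p {ω | X ω ≤ r} = q {ω' | Y ω' ≤ r} :=
  measure_le_eq_of_monotone_of_uniform (monotone_measure_setOf_le_s5 q Y)
    fun u hu => huniform u (hu.trans prob_le_one)

end

/-- **Converse direction of ball probability equivalence.** If the ball probability
rank `U_q(θ*) = q {θ | ‖φ θ - φ θl‖ ≤ ‖φ θ* - φ θl‖}` is uniformly distributed on
`[0,1]` when `θ* ∼ p`, where `r ↦ q(B_r)` is continuous, then `p(B_r) = q(B_r)` for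
every radius `r ≥ 0`. -/
theorem ball_probability_converse
    (D m : ℕ)
    (p q : Measure (EuclideanSpace ℝ (Fin D)))
    [IsProbabilityMeasure p] [IsProbabilityMeasure q]
    (θl : EuclideanSpace ℝ (Fin D))
    (φ : EuclideanSpace ℝ (Fin D) → EuclideanSpace ℝ (Fin m))
    (hφ_meas : Measurable φ)
    (hcont : Continuous fun r : ℝ =>
      q {θ : EuclideanSpace ℝ (Fin D) | ‖φ θ - φ θl‖ ≤ r})
    (huniform : ∀ u : ℝ≥0∞, u ≤ 1 →
        p {θs : EuclideanSpace ℝ (Fin D) |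
            q {θ : EuclideanSpace ℝ (Fin D) | ‖φ θ - φ θl‖ ≤ ‖φ θs - φ θl‖} ≤ u} = u) :
    ∀ r : ℝ, 0 ≤ r →
      p {θ : EuclideanSpace ℝ (Fin D) | ‖φ θ - φ θl‖ ≤ r}
        = q {θ : EuclideanSpace ℝ (Fin D) | ‖φ θ - φ θl‖ ≤ r} :=
  fun r _ => ball_probability_converse_general p q
    (fun θ => ‖φ θ - φ θl‖) (fun θ => ‖φ θ - φ θl‖) huniform r
end
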